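/- Let n ≥ 1 and let a = (a_1,…,a_m) be a one-row descending plane partition of order n with no special part, i.e., n ≥ a_1 ≥ a_2 ≥ … ≥ a_m ≥ 1, a_1 > m, and a_k ≥ k for all 1 ≤ k ≤ m. Set γ_k = a_k − (k−1) for 1 ≤ k ≤ m. Then n ≥ γ_1 > γ_2 > … > γ_m ≥ 1; moreover, letting β be the list of the elements of {1,…,n} \ {γ_1,…,γ_m} in decreasing order, β is nonempty (so m < n) and the concatenated word βγ is a permutation of {1,…,n} with exactly one ascent, occurring at the junction of β and γ. -/

import Mathlib

/-- A one-row descending plane partition of order `n` with no special part: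
a weakly decreasing list of integers in `{1,…,n}` whose first entry exceeds its length
and whose `k`-th entry (1-indexed) is at least `k`. -/
def OneRowDPP (n : ℕ) (a : List ℕ) : Prop :=
  a.Chain' (· ≥ ·) ∧ (∀ x ∈ a, 1 ≤ x ∧ x ≤ n) ∧ a.length < a.getD 0 0 ∧
  ∀ p < a.length, p < a.getD p 0

/-- The number of ascents of a word `l`: positions `k` (0-indexed) with `l_k < l_{k+1}`. -/
def numAscents (l : List ℕ) : ℕ :=
  ((List.range (l.length - 1)).filter fun k => decide (l.getD k 0 < l.getD (k + 1) 0)).length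

/-! Since `a_k ≥ k`, subtracting `k - 1` from `a_k` never truncates, and it makes the weakly
decreasing `a` strictly decreasing. The resulting word `γ` has `m` letters and its first letter is
`a_1 > m`, so `γ` misses some letter `x ≤ m`. Hence `β` is nonempty and its last letter is at most
`x ≤ m < a_1`, which gives the ascent at the junction; `β` and `γ` themselves have none because
they are decreasing. -/

theorem numAscents_cons_cons (x y : ℕ) (l : List ℕ) :
    numAscents (x :: y :: l) = (if x < y then 1 else 0) + numAscents (y :: l) := by
  unfold numAscents
  simp only [List.length_cons, Nat.add_sub_cancel, List.range_succ_eq_map (n := l.length),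
    List.filter_cons, List.filter_map]
  split_ifs <;> simp_all [Function.comp_def, Nat.add_comm]

theorem numAscents_eq_zero_of_isChain {l : List ℕ} (hl : l.IsChain (· ≥ ·)) :
    numAscents l = 0 := by
  induction hl with
  | nil => rfl
  | singleton => rfl
  | cons_cons hxy _ ih => rw [numAscents_cons_cons, ih, if_neg hxy.not_gt]

theorem numAscents_append {l₁ l₂ : List ℕ} (h₁ : l₁ ≠ []) (h₂ : l₂ ≠ []) :
    numAscents (l₁ ++ l₂) =
      numAscents l₁ + (if l₁.getLast h₁ < l₂.head h₂ then 1 else 0) + numAscents l₂ := by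
  obtain ⟨y, t, rfl⟩ := List.exists_cons_of_ne_nil h₂
  induction l₁ with
  | nil => contradiction
  | cons x s ih =>
    cases s with
    | nil =>
      rw [numAscents_eq_zero_of_isChain (.singleton x), Nat.zero_add]
      exact numAscents_cons_cons x y t
    | cons z u =>
      have hstep : numAscents (x :: z :: u ++ y :: t) =
          (if x < z then 1 else 0) + numAscents (z :: u ++ y :: t) := numAscents_cons_cons x z _
      rw [hstep, ih (List.cons_ne_nil z u), numAscents_cons_cons x z u, List.getLast_cons_cons]
      ring

theorem numAscents_append_eq_one {l₁ l₂ : List ℕ} (hl₁ : l₁.IsChain (· ≥ ·))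
    (hl₂ : l₂.IsChain (· ≥ ·)) (h₁ : l₁ ≠ []) (h₂ : l₂ ≠ [])
    (hlt : l₁.getLast h₁ < l₂.head h₂) : numAscents (l₁ ++ l₂) = 1 := by
  rw [numAscents_append h₁ h₂, numAscents_eq_zero_of_isChain hl₁,
    numAscents_eq_zero_of_isChain hl₂, if_pos hlt]

section DescComplement

variable {α : Type*} [LinearOrder α]

/-- The elements of `s` not occurring in the word `l`, listed in decreasing order. For
`s = {1,…,n}` and `l = γ` this is the word `β`. -/
def descComplement (s : Finset α) (l : List α) : List α :=
  ((s.filter fun x => x ∉ l).sort (· ≤ ·)).reverse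

theorem mem_descComplement {s : Finset α} {l : List α} {x : α} :
    x ∈ descComplement s l ↔ x ∈ s ∧ x ∉ l := by
  simp [descComplement]

theorem pairwise_descComplement (s : Finset α) (l : List α) :
    (descComplement s l).Pairwise (· > ·) :=
  List.pairwise_reverse.2 (Finset.sortedLT_sort _).pairwise

theorem getLast_descComplement_le {s : Finset α} {l : List α} {x : α}
    (hx : x ∈ descComplement s l) :
    (descComplement s l).getLast (List.ne_nil_of_mem hx) ≤ x :=
  ((pairwise_descComplement s l).imp le_of_lt).rel_getLast hx

theorem descComplement_append_perm {s : Finset α} {l : List α} (hl : l.Nodup)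
    (hls : ∀ x ∈ l, x ∈ s) : (descComplement s l ++ l).Perm s.toList := by
  have hnodup : (descComplement s l ++ l).Nodup :=
    List.nodup_append'.2 ⟨(pairwise_descComplement s l).imp ne_of_gt, hl,
      fun _ hx => (mem_descComplement.1 hx).2⟩
  refine (List.perm_ext_iff_of_nodup hnodup s.nodup_toList).2 fun x => ?_
  rw [List.mem_append, mem_descComplement, Finset.mem_toList]
  have := hls x
  tauto

end DescComplement

theorem exists_mem_Icc_length_notMem {l : List ℕ} {y : ℕ} (hy : y ∈ l) (hlt : l.length < y) :
    ∃ x ∈ Finset.Icc 1 l.length, x ∉ l := by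
  by_contra! hcover
  have hsub : Finset.Icc 1 l.length ⊆ l.toFinset :=
    fun x hx => List.mem_toFinset.2 (hcover x hx)
  have hcard : l.toFinset.card ≤ (Finset.Icc 1 l.length).card := by
    simpa using l.toFinset_card_le
  have hyIcc : y ∈ Finset.Icc 1 l.length := by
    rwa [Finset.eq_of_subset_of_card_le hsub hcard, List.mem_toFinset]
  exact hlt.not_ge (Finset.mem_Icc.1 hyIcc).2

theorem exists_mem_descComplement_le_length {n : ℕ} {l : List ℕ} {y : ℕ} (hy : y ∈ l)
    (hlt : l.length < y) (hn : y ≤ n) :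
    ∃ x ∈ descComplement (Finset.Icc 1 n) l, x ≤ l.length := by
  obtain ⟨x, hx, hxl⟩ := exists_mem_Icc_length_notMem hy hlt
  rw [Finset.mem_Icc] at hx
  exact ⟨x, mem_descComplement.2 ⟨Finset.mem_Icc.2 (by omega), hxl⟩, hx.2⟩

/-- The word `γ` attached to `a`, with `γ_k = a_k - (k-1)` in 1-based indexing. Subtraction is
truncated, so this is the intended word only when `a_k ≥ k - 1` for all `k`. -/
def subIndex (a : List ℕ) : List ℕ :=
  a.mapIdx fun i x => x - i

theorem length_subIndex (a : List ℕ) : (subIndex a).length = a.length :=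
  List.length_mapIdx

theorem getElem_subIndex {a : List ℕ} {i : ℕ} (hi : i < (subIndex a).length) :
    (subIndex a)[i] = a[i]'(length_subIndex a ▸ hi) - i :=
  List.getElem_mapIdx

theorem subIndex_ne_nil {a : List ℕ} (ha : a ≠ []) : subIndex a ≠ [] :=
  mt List.mapIdx_eq_nil_iff.1 ha

theorem head_subIndex {a : List ℕ} (ha : a ≠ []) :
    (subIndex a).head (subIndex_ne_nil ha) = a.head ha :=
  List.head_mapIdx

theorem isChain_gt_subIndex {a : List ℕ} (ha : a.IsChain (· ≥ ·))
    (hlt : ∀ (i : ℕ) (hi : i < a.length), i < a[i]) : (subIndex a).IsChain (· > ·) := by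
  refine List.isChain_iff_getElem.2 fun i hi => ?_
  rw [length_subIndex] at hi
  have hstep : a[i] ≥ a[i + 1] := List.isChain_iff_getElem.1 ha i hi
  have hi_lt : i < a[i] := hlt i (by omega)
  rw [getElem_subIndex, getElem_subIndex]
  omega

namespace OneRowDPP

variable {n : ℕ} {a : List ℕ}

theorem ne_nil (ha : OneRowDPP n a) : a ≠ [] := by
  rintro rfl
  exact absurd ha.2.2.1 (by simp)

theorem length_lt_head (ha : OneRowDPP n a) : a.length < a.head ha.ne_nil := by
  have h := ha.2.2.1
  rwa [List.getD_eq_getElem _ _ (List.length_pos_iff.2 ha.ne_nil), ← List.head_eq_getElem] at h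

theorem lt_getElem (ha : OneRowDPP n a) (i : ℕ) (hi : i < a.length) : i < a[i] := by
  have h := ha.2.2.2 i hi
  rwa [List.getD_eq_getElem _ _ hi] at h

theorem isChain_subIndex (ha : OneRowDPP n a) : (subIndex a).IsChain (· > ·) :=
  isChain_gt_subIndex ha.1 ha.lt_getElem

theorem mem_Icc_of_mem_subIndex (ha : OneRowDPP n a) {x : ℕ} (hx : x ∈ subIndex a) :
    x ∈ Finset.Icc 1 n := by
  obtain ⟨i, hi, rfl⟩ := List.getElem_of_mem hx
  rw [length_subIndex] at hi
  have hlow : i < a[i] := ha.lt_getElem i hi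
  have hupp : a[i] ≤ n := (ha.2.1 _ (List.getElem_mem hi)).2
  rw [getElem_subIndex, Finset.mem_Icc]
  omega

theorem head_le (ha : OneRowDPP n a) : a.head ha.ne_nil ≤ n :=
  (ha.2.1 _ (List.head_mem ha.ne_nil)).2

theorem exists_mem_descComplement_lt_head (ha : OneRowDPP n a) :
    ∃ x ∈ descComplement (Finset.Icc 1 n) (subIndex a), x < a.head ha.ne_nil := by
  have hmem : a.head ha.ne_nil ∈ subIndex a :=
    head_subIndex ha.ne_nil ▸ List.head_mem (subIndex_ne_nil ha.ne_nil)
  have hlt : (subIndex a).length < a.head ha.ne_nil := length_subIndex a ▸ ha.length_lt_head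
  obtain ⟨x, hx, hxle⟩ := exists_mem_descComplement_le_length hmem hlt ha.head_le
  exact ⟨x, hx, hxle.trans_lt hlt⟩

theorem descComplement_append_subIndex_perm (ha : OneRowDPP n a) :
    (descComplement (Finset.Icc 1 n) (subIndex a) ++ subIndex a).Perm (List.range' 1 n) := by
  have hnodup : (subIndex a).Nodup :=
    (List.isChain_iff_pairwise.1 ha.isChain_subIndex).imp ne_of_gt
  refine (descComplement_append_perm hnodup fun _ => ha.mem_Icc_of_mem_subIndex).trans ?_
  rw [← List.toFinset_range'_1_1]
  exact List.toFinset_toList List.nodup_range'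

end OneRowDPP

/-- From a one-row DPP `a = (a_1,…,a_m)` of order `n` with no special part, setting
`γ_k = a_k - (k-1)` gives a strictly decreasing list of elements of `{1,…,n}`; letting `β`
list `{1,…,n} \ γ` in decreasing order, `β` is nonempty (so `m < n`) and `β ++ γ` is a
permutation of `{1,…,n}` with exactly one ascent, occurring at the junction of `β` and `γ`. -/
theorem oneRowDPP_to_perm (n : ℕ) (hn : 1 ≤ n) (a : List ℕ) (ha : OneRowDPP n a)
    (γ β : List ℕ)
    (hγ : γ = a.mapIdx fun i x => x - i)
    (hβ : β = (((Finset.Icc 1 n).filter fun x => x ∉ γ).sort (· ≤ ·)).reverse) :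
    γ.Chain' (· > ·) ∧ (∀ x ∈ γ, 1 ≤ x ∧ x ≤ n) ∧
      β ≠ [] ∧ a.length < n ∧
      (β ++ γ).Perm (List.range' 1 n) ∧
      numAscents (β ++ γ) = 1 ∧
      β.getD (β.length - 1) 0 < γ.getD 0 0 := by
  obtain rfl : γ = subIndex a := hγ
  obtain rfl : β = descComplement (Finset.Icc 1 n) (subIndex a) := hβ
  have hγ_ne : subIndex a ≠ [] := subIndex_ne_nil ha.ne_nil
  obtain ⟨x, hxβ, hx_lt⟩ := ha.exists_mem_descComplement_lt_head
  have hβ_ne := List.ne_nil_of_mem hxβ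
  have hjunction : (descComplement (Finset.Icc 1 n) (subIndex a)).getLast hβ_ne <
      (subIndex a).head hγ_ne := by
    rw [head_subIndex ha.ne_nil]
    exact (getLast_descComplement_le hxβ).trans_lt hx_lt
  refine ⟨ha.isChain_subIndex, fun x hx => Finset.mem_Icc.1 (ha.mem_Icc_of_mem_subIndex hx),
    hβ_ne, ha.length_lt_head.trans_le ha.head_le, ha.descComplement_append_subIndex_perm, ?_, ?_⟩
  · exact numAscents_append_eq_one ((pairwise_descComplement _ _).imp le_of_lt).isChain
      (ha.isChain_subIndex.imp fun _ _ => le_of_lt) hβ_ne hγ_ne hjunction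
  · rwa [List.getLast_eq_getElem, List.head_eq_getElem, ← List.getD_eq_getElem _ 0,
      ← List.getD_eq_getElem _ 0] at hjunction
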